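/- arXiv:2206.11295 — 3 statements merged into one kernel-verified Lean document; each statement's English description precedes it below -/
import Mathlib

section
/- Let m ≥ 2 and let B_1,…,B_n (n ≥ 2) be a partition of {1,…,m} into nonempty blocks. Let φ be a smooth diffeomorphism from a neighborhood of 0 in ℝ^m onto an open subset of ℝ^m of block-product form φ(x) = (φ_1(x_{B_1}),…,φ_n(x_{B_n})) with φ(0)=0, and let h, h̃ be smooth positive functions (h defined near 0, h̃ defined near 0) related by h(x) = h̃(φ(x))·|∏_{i=1}^n det Dφ_i(x_{B_i})|. Then for every pair of indices k ∈ B_i, l ∈ B_j with i ≠ j and every x near 0: ∂²(log h)/∂x_k∂x_l (x) = Σ_{a∈B_i} Σ_{b∈B_j} (∂²(log h̃)/∂y_a∂y_b)(φ(x)) · (∂φ_a/∂x_k)(x) · (∂φ_b/∂x_l)(x), where φ_a denotes the a-th component function of φ. In other words, the symmetric 2-tensor Σ_{k≁l} (∂²(log h)/∂x_k∂x_l) dx_k dx_l is the pullback under φ of the corresponding tensor built from h̃. -/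
/-!
On `U` one has `log h = log ∘ h̃ ∘ φ + ∑ i, log |det Dφ_i|`, and `det Dφ_i` depends only on the
coordinates in `B i`, so a derivative across two blocks kills the sum. In the second-order chain
rule `D²(F ∘ φ)(w, v) = D²F(Dφ w, Dφ v) + DF(D²φ(w, v))` the last term vanishes across blocks for
the same reason, and the first is the pullback because `Dφ` maps the span of each block to itself.
-/

open MeasureTheory

noncomputable section

/-- Second mixed partial derivative `∂²(log h)/∂x_k∂x_l` at `x`. -/
def logpd2 {m : ℕ} (h : (Fin m → ℝ) → ℝ) (k l : Fin m) (x : Fin m → ℝ) : ℝ :=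
  fderiv ℝ (fun y => fderiv ℝ (fun z => Real.log (h z)) y (Pi.single k (1:ℝ)))
    x (Pi.single l 1)

/-- Determinant of the Jacobian of the block map `φ_i`. -/
def blockDet {m n : ℕ} (B : Fin n → Finset (Fin m)) (φ : (Fin m → ℝ) → (Fin m → ℝ))
    (i : Fin n) (x : Fin m → ℝ) : ℝ :=
  Matrix.det (Matrix.of fun a k : ↥(B i) =>
    fderiv ℝ (fun z => φ z a.1) x (Pi.single k.1 (1:ℝ)))

open scoped Topology

section SecondDerivative

variable {𝕜 E F G : Type*} [NontriviallyNormedField 𝕜]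
  [NormedAddCommGroup E] [NormedSpace 𝕜 E] [NormedAddCommGroup F] [NormedSpace 𝕜 F]
  [NormedAddCommGroup G] [NormedSpace 𝕜 G]

theorem eventually_differentiableAt_of_contDiffAt_two {f : E → F} {x : E}
    (hf : ContDiffAt 𝕜 2 f x) : ∀ᶠ y in 𝓝 x, DifferentiableAt 𝕜 f y :=
  (hf.eventually (by simp)).mono fun _ hy => hy.differentiableAt (by simp)

theorem differentiableAt_fderiv_of_contDiffAt_two {f : E → F} {x : E}
    (hf : ContDiffAt 𝕜 2 f x) : DifferentiableAt 𝕜 (fderiv 𝕜 f) x :=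
  (hf.fderiv_right (m := 1) (by norm_num)).differentiableAt one_ne_zero

theorem fderiv_fderiv_apply_const {f : E → F} {x : E} (hf : DifferentiableAt 𝕜 (fderiv 𝕜 f) x)
    (v w : E) : fderiv 𝕜 (fun y => fderiv 𝕜 f y v) x w = fderiv 𝕜 (fderiv 𝕜 f) x w v := by
  simp [fderiv_clm_apply hf (differentiableAt_const v)]

theorem fderiv_fderiv_fun_add {f g : E → F} {x : E} (hf : ContDiffAt 𝕜 2 f x)
    (hg : ContDiffAt 𝕜 2 g x) :
    fderiv 𝕜 (fderiv 𝕜 fun y => f y + g y) x =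
      fderiv 𝕜 (fderiv 𝕜 f) x + fderiv 𝕜 (fderiv 𝕜 g) x := by
  have hfirst : fderiv 𝕜 (fun y => f y + g y) =ᶠ[𝓝 x] fun y => fderiv 𝕜 f y + fderiv 𝕜 g y := by
    filter_upwards [eventually_differentiableAt_of_contDiffAt_two hf,
      eventually_differentiableAt_of_contDiffAt_two hg] with y hfy hgy
    exact fderiv_fun_add hfy hgy
  rw [hfirst.fderiv_eq, fderiv_fun_add (differentiableAt_fderiv_of_contDiffAt_two hf)
    (differentiableAt_fderiv_of_contDiffAt_two hg)]

theorem fderiv_fderiv_fun_sum {ι : Type*} {s : Finset ι} {f : ι → E → F} {x : E}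
    (hf : ∀ i ∈ s, ContDiffAt 𝕜 2 (f i) x) :
    fderiv 𝕜 (fderiv 𝕜 fun y => ∑ i ∈ s, f i y) x = ∑ i ∈ s, fderiv 𝕜 (fderiv 𝕜 (f i)) x := by
  have hfirst : fderiv 𝕜 (fun y => ∑ i ∈ s, f i y) =ᶠ[𝓝 x] fun y => ∑ i ∈ s, fderiv 𝕜 (f i) y := by
    have hdiff : ∀ᶠ y in 𝓝 x, ∀ i ∈ s, DifferentiableAt 𝕜 (f i) y :=
      (Filter.eventually_all_finset s).2 fun i hi =>
        eventually_differentiableAt_of_contDiffAt_two (hf i hi)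
    exact hdiff.mono fun y hy => fderiv_fun_sum hy
  rw [hfirst.fderiv_eq,
    fderiv_fun_sum fun i hi => differentiableAt_fderiv_of_contDiffAt_two (hf i hi)]

theorem fderiv_fderiv_comp_apply {g : F → G} {f : E → F} {x : E}
    (hg : ContDiffAt 𝕜 2 g (f x)) (hf : ContDiffAt 𝕜 2 f x) (w v : E) :
    fderiv 𝕜 (fderiv 𝕜 (g ∘ f)) x w v =
      fderiv 𝕜 (fderiv 𝕜 g) (f x) (fderiv 𝕜 f x w) (fderiv 𝕜 f x v) +
        fderiv 𝕜 g (f x) (fderiv 𝕜 (fderiv 𝕜 f) x w v) := by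
  have hfirst : fderiv 𝕜 (g ∘ f) =ᶠ[𝓝 x] fun y => (fderiv 𝕜 g (f y)).comp (fderiv 𝕜 f y) := by
    filter_upwards [hf.continuousAt.eventually (eventually_differentiableAt_of_contDiffAt_two hg),
      eventually_differentiableAt_of_contDiffAt_two hf] with y hgy hfy
    exact fderiv_comp y hgy hfy
  have hfx : DifferentiableAt 𝕜 f x := hf.differentiableAt two_ne_zero
  have hDf : HasFDerivAt (fderiv 𝕜 f) (fderiv 𝕜 (fderiv 𝕜 f) x) x :=
    (differentiableAt_fderiv_of_contDiffAt_two hf).hasFDerivAt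
  have hDgf : HasFDerivAt (fun y => fderiv 𝕜 g (f y))
      ((fderiv 𝕜 (fderiv 𝕜 g) (f x)).comp (fderiv 𝕜 f x)) x :=
    (differentiableAt_fderiv_of_contDiffAt_two hg).hasFDerivAt.comp x hfx.hasFDerivAt
  rw [hfirst.fderiv_eq, (hDgf.clm_comp hDf).fderiv]
  simp [add_comm]

theorem fderiv_fderiv_pi_apply {ι : Type*} [Fintype ι] {H : ι → Type*}
    [∀ i, NormedAddCommGroup (H i)] [∀ i, NormedSpace 𝕜 (H i)] {f : E → Π i, H i} {x : E}
    (hf : ContDiffAt 𝕜 2 f x) (w v : E) (a : ι) :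
    fderiv 𝕜 (fderiv 𝕜 f) x w v a = fderiv 𝕜 (fderiv 𝕜 fun y => f y a) x w v := by
  let evalAt : (Π i, H i) →L[𝕜] H a := ContinuousLinearMap.proj a
  have hfirst : (fderiv 𝕜 fun y => f y a) =ᶠ[𝓝 x] fun y => evalAt.comp (fderiv 𝕜 f y) :=
    (eventually_differentiableAt_of_contDiffAt_two hf).mono fun y hy => fderiv_apply hy a
  rw [hfirst.fderiv_eq, fderiv_clm_comp (differentiableAt_const _)
    (differentiableAt_fderiv_of_contDiffAt_two hf)]
  simp [evalAt]

theorem contDiffAt_matrix_det {ι : Type*} [Fintype ι] [DecidableEq ι] {n : WithTop ℕ∞}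
    {A : E → Matrix ι ι 𝕜} {x : E} (hA : ∀ a b, ContDiffAt 𝕜 n (fun y => A y a b) x) :
    ContDiffAt 𝕜 n (fun y => (A y).det) x := by
  simp only [Matrix.det_apply]
  exact ContDiffAt.sum fun σ _ => (contDiffAt_prod fun a _ => hA (σ a) a).const_smul _

end SecondDerivative

theorem single_apply_eq_zero_of_notMem {ι : Type*} [DecidableEq ι] {M : ι → Type*}
    [∀ i, Zero (M i)] {S : Set ι} {k : ι} (hk : k ∉ S) (c : M k) :
    ∀ a ∈ S, (Pi.single k c : Π i, M i) a = 0 :=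
  fun _ ha => Pi.single_eq_of_ne (ne_of_mem_of_not_mem ha hk) c

/-- `f` depends, on `U`, only on the coordinates in `S`: the version of `DependsOn` relative to a
set. Two points of `U` are compared even if they lie in different components of a slice of `U`. -/
def DependsOnWithin {ι β : Type*} {E : ι → Type*} (f : (Π i, E i) → β) (S : Set ι)
    (U : Set (Π i, E i)) : Prop :=
  ∀ x ∈ U, ∀ y ∈ U, (∀ k ∈ S, x k = y k) → f x = f y

namespace DependsOnWithin

theorem comp {ι β γ : Type*} {E : ι → Type*} {f : (Π i, E i) → β} {S : Set ι} {U : Set (Π i, E i)}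
    (hf : DependsOnWithin f S U) (g : β → γ) : DependsOnWithin (fun x => g (f x)) S U :=
  fun x hx y hy hxy => congrArg g (hf x hx y hy hxy)

variable {𝕜 ι F : Type*} [NontriviallyNormedField 𝕜] [Finite ι] {E : ι → Type*}
  [∀ i, NormedAddCommGroup (E i)] [∀ i, NormedSpace 𝕜 (E i)]
  [NormedAddCommGroup F] [NormedSpace 𝕜 F]
  {f : (Π i, E i) → F} {S : Set ι} {U : Set (Π i, E i)}

theorem dependsOnWithin_fderiv (hf : DependsOnWithin f S U) (hU : IsOpen U) :
    DependsOnWithin (fderiv 𝕜 f) S U := by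
  cases nonempty_fintype ι
  intro x hx y hy hxy
  have htranslate : (fun z => f (z + (y - x))) =ᶠ[𝓝 x] f := by
    have htendsto : ContinuousAt (fun z => z + (y - x)) x := by fun_prop
    filter_upwards [hU.mem_nhds hx, htendsto (hU.mem_nhds (by simpa using hy))] with z hz hz'
    exact hf _ hz' _ hz fun k hk => by simp [hxy k hk]
  rw [← htranslate.fderiv_eq, fderiv_comp_add_right, add_sub_cancel]

theorem fderiv_apply_eq_zero (hf : DependsOnWithin f S U) (hU : IsOpen U) {x v : Π i, E i}
    (hx : x ∈ U) (hv : ∀ k ∈ S, v k = 0) : fderiv 𝕜 f x v = 0 := by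
  cases nonempty_fintype ι
  by_cases hd : DifferentiableAt 𝕜 f x
  · have hconst : (fun t : 𝕜 => f (x + t • v)) =ᶠ[𝓝 0] fun _ => f x := by
      have hline : ContinuousAt (fun t : 𝕜 => x + t • v) 0 := by fun_prop
      filter_upwards [hline (hU.mem_nhds (by simpa using hx))] with t ht
      exact hf _ ht _ hx fun k hk => by simp [hv k hk]
    rw [← hd.lineDeriv_eq_fderiv, lineDeriv, hconst.deriv_eq, deriv_const]
  · rw [fderiv_zero_of_not_differentiableAt hd, zero_apply]

theorem fderiv_fderiv_apply_eq_zero (hf : DependsOnWithin f S U) (hU : IsOpen U)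
    {x v w : Π i, E i} (hx : x ∈ U) (hvw : (∀ k ∈ S, v k = 0) ∨ ∀ k ∈ S, w k = 0) :
    fderiv 𝕜 (fderiv 𝕜 f) x w v = 0 := by
  cases nonempty_fintype ι
  rcases hvw with hv | hw
  · by_cases hd : DifferentiableAt 𝕜 (fderiv 𝕜 f) x
    · have hfirst : (fun y => fderiv 𝕜 f y v) =ᶠ[𝓝 x] fun _ => 0 :=
        Filter.eventually_of_mem (hU.mem_nhds hx) fun y hy => hf.fderiv_apply_eq_zero hU hy hv
      rw [← fderiv_fderiv_apply_const hd, hfirst.fderiv_eq]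
      simp
    · simp [fderiv_zero_of_not_differentiableAt hd]
  · simp [(hf.dependsOnWithin_fderiv hU).fderiv_apply_eq_zero hU hx hw]

theorem fderiv_single_eq_zero [DecidableEq ι] (hf : DependsOnWithin f S U) (hU : IsOpen U)
    {x : Π i, E i} (hx : x ∈ U) {k : ι} (hk : k ∉ S) (c : E k) :
    fderiv 𝕜 f x (Pi.single k c) = 0 :=
  hf.fderiv_apply_eq_zero hU hx (single_apply_eq_zero_of_notMem hk c)

theorem fderiv_fderiv_single_single_eq_zero [DecidableEq ι] (hf : DependsOnWithin f S U)
    (hU : IsOpen U) {x : Π i, E i} (hx : x ∈ U) {k l : ι} (hkl : k ∉ S ∨ l ∉ S)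
    (c : E k) (d : E l) :
    fderiv 𝕜 (fderiv 𝕜 f) x (Pi.single l d) (Pi.single k c) = 0 :=
  hf.fderiv_fderiv_apply_eq_zero hU hx <| hkl.imp
    (fun hk => single_apply_eq_zero_of_notMem hk c) fun hl => single_apply_eq_zero_of_notMem hl d

end DependsOnWithin

/-- The sets `B i` form a partition of the index type into blocks indexed by `i`. Blocks are allowed
to be empty. -/
structure IsBlockPartition {κ ι : Type*} (B : κ → Finset ι) : Prop where
  pairwise_disjoint : Pairwise (Function.onFun Disjoint B)
  exists_mem : ∀ k, ∃ i, k ∈ B i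

namespace IsBlockPartition

variable {κ ι : Type*} {B : κ → Finset ι} {i j : κ} {k l : ι}

theorem notMem_of_ne (hB : IsBlockPartition B) (hij : i ≠ j) (hk : k ∈ B i) : k ∉ B j :=
  Finset.disjoint_left.1 (hB.pairwise_disjoint hij) hk

theorem notMem_or_notMem (hB : IsBlockPartition B) (hij : i ≠ j) (hk : k ∈ B i) (hl : l ∈ B j)
    (p : κ) : k ∉ B p ∨ l ∉ B p := by
  rcases eq_or_ne i p with rfl | hip
  · exact Or.inr (hB.notMem_of_ne hij.symm hl)
  · exact Or.inl (hB.notMem_of_ne hip hk)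

end IsBlockPartition

/-- `φ` has block-product form `φ(x) = (φ_i(x_{B_i}))_i` on `U`: each component with index in `B i`
depends only on the coordinates in `B i`. -/
def IsBlockProductOn {κ ι E : Type*} (B : κ → Finset ι) (φ : (ι → E) → ι → E)
    (U : Set (ι → E)) : Prop :=
  ∀ i, ∀ a ∈ B i, DependsOnWithin (fun x => φ x a) (B i) U

namespace IsBlockProductOn

variable {𝕜 κ ι G : Type*} [NontriviallyNormedField 𝕜] [DecidableEq ι]
  [NormedAddCommGroup G] [NormedSpace 𝕜 G]
  {B : κ → Finset ι} {φ : (ι → 𝕜) → ι → 𝕜} {U : Set (ι → 𝕜)} {i j : κ} {k l : ι} {x : ι → 𝕜}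

theorem fderiv_single_eq_sum [Finite ι] (hφ : IsBlockProductOn B φ U)
    (hB : IsBlockPartition B) (hU : IsOpen U) (hk : k ∈ B i) (hx : x ∈ U)
    (hd : DifferentiableAt 𝕜 φ x) :
    fderiv 𝕜 φ x (Pi.single k 1) =
      ∑ a ∈ B i, fderiv 𝕜 (fun z => φ z a) x (Pi.single k 1) • Pi.single a (1 : 𝕜) := by
  cases nonempty_fintype ι
  have hcomp (a : ι) : fderiv 𝕜 φ x (Pi.single k 1) a =
      fderiv 𝕜 (fun z => φ z a) x (Pi.single k 1) := by
    rw [fderiv_apply hd a]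
    rfl
  have hoff (a : ι) (ha : a ∉ B i) : fderiv 𝕜 (fun z => φ z a) x (Pi.single k 1) = 0 := by
    obtain ⟨j, haj⟩ := hB.exists_mem a
    have hij : i ≠ j := fun h => ha (h ▸ haj)
    exact (hφ j a haj).fderiv_single_eq_zero hU hx (hB.notMem_of_ne hij hk) 1
  rw [pi_eq_sum_univ' (fderiv 𝕜 φ x (Pi.single k 1))]
  simp only [hcomp]
  refine (Finset.sum_subset (Finset.subset_univ _) fun a _ ha => ?_).symm
  rw [hoff a ha, zero_smul]

theorem fderiv_fderiv_single_single_eq_zero [Fintype ι] (hφ : IsBlockProductOn B φ U)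
    (hB : IsBlockPartition B) (hU : IsOpen U) (hij : i ≠ j) (hk : k ∈ B i)
    (hl : l ∈ B j) (hx : x ∈ U) (hφx : ContDiffAt 𝕜 2 φ x) :
    fderiv 𝕜 (fderiv 𝕜 φ) x (Pi.single l 1) (Pi.single k 1) = 0 := by
  ext a
  obtain ⟨p, hap⟩ := hB.exists_mem a
  rw [fderiv_fderiv_pi_apply hφx]
  exact (hφ p a hap).fderiv_fderiv_single_single_eq_zero hU hx
    (hB.notMem_or_notMem hij hk hl p) 1 1

theorem fderiv_fderiv_comp_single_single [Fintype ι] (hφ : IsBlockProductOn B φ U)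
    (hB : IsBlockPartition B) (hU : IsOpen U) (hij : i ≠ j) (hk : k ∈ B i)
    (hl : l ∈ B j) (hx : x ∈ U) (hφx : ContDiffAt 𝕜 2 φ x)
    {g : (ι → 𝕜) → G} (hg : ContDiffAt 𝕜 2 g (φ x)) :
    fderiv 𝕜 (fderiv 𝕜 (g ∘ φ)) x (Pi.single l 1) (Pi.single k 1) =
      ∑ a ∈ B i, ∑ b ∈ B j,
        (fderiv 𝕜 (fun z => φ z a) x (Pi.single k 1) *
          fderiv 𝕜 (fun z => φ z b) x (Pi.single l 1)) •
            fderiv 𝕜 (fderiv 𝕜 g) (φ x) (Pi.single b 1) (Pi.single a 1) := by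
  have hd : DifferentiableAt 𝕜 φ x := hφx.differentiableAt two_ne_zero
  rw [fderiv_fderiv_comp_apply hg hφx,
    hφ.fderiv_fderiv_single_single_eq_zero hB hU hij hk hl hx hφx, map_zero, add_zero,
    hφ.fderiv_single_eq_sum hB hU hk hx hd, hφ.fderiv_single_eq_sum hB hU hl hx hd]
  simp only [map_sum, map_smul, sum_apply, smul_apply, Finset.smul_sum, smul_smul]

end IsBlockProductOn

section BlockDet

variable {m n : ℕ} {B : Fin n → Finset (Fin m)} {φ : (Fin m → ℝ) → Fin m → ℝ}

theorem contDiffAt_blockDet {r : WithTop ℕ∞} {x : Fin m → ℝ} (hφ : ContDiffAt ℝ (r + 1) φ x)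
    (i : Fin n) : ContDiffAt ℝ r (blockDet B φ i) x :=
  contDiffAt_matrix_det fun a _ =>
    ((contDiffAt_pi.1 hφ a).fderiv_right le_rfl).clm_apply contDiffAt_const

theorem IsBlockProductOn.dependsOnWithin_blockDet {U : Set (Fin m → ℝ)}
    (hφ : IsBlockProductOn B φ U) (hU : IsOpen U) (i : Fin n) :
    DependsOnWithin (blockDet B φ i) (B i) U := by
  intro x hx y hy hxy
  unfold blockDet
  congr 1
  ext a k
  exact DFunLike.congr_fun
    ((hφ i a a.2).dependsOnWithin_fderiv (𝕜 := ℝ) hU x hx y hy hxy) (Pi.single k.1 1)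

theorem fderiv_fderiv_sum_log_blockDet_eq_zero {U : Set (Fin m → ℝ)} (hφ : IsBlockProductOn B φ U)
    (hB : IsBlockPartition B) (hU : IsOpen U) {i j : Fin n} {k l : Fin m} (hij : i ≠ j)
    (hk : k ∈ B i) (hl : l ∈ B j) {x : Fin m → ℝ} (hx : x ∈ U)
    (hlogdet : ∀ p, ContDiffAt ℝ 2 (fun z => Real.log (blockDet B φ p z)) x) :
    fderiv ℝ (fderiv ℝ fun z => ∑ p, Real.log (blockDet B φ p z)) x
      (Pi.single l 1) (Pi.single k 1) = 0 := by
  rw [fderiv_fderiv_fun_sum fun p _ => hlogdet p]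
  simp only [sum_apply]
  exact Finset.sum_eq_zero fun p _ =>
    ((hφ.dependsOnWithin_blockDet hU p).comp Real.log).fderiv_fderiv_single_single_eq_zero hU hx
      (hB.notMem_or_notMem hij hk hl p) 1 1

end BlockDet

-- No absolute values are needed on the right: `Real.log t` is `log |t|` for every `t ≠ 0`.
theorem log_mul_abs_prod {ι : Type*} {s : Finset ι} {c : ℝ} {d : ι → ℝ} (hc : c ≠ 0)
    (hd : ∀ i ∈ s, d i ≠ 0) :
    Real.log (c * |∏ i ∈ s, d i|) = Real.log c + ∑ i ∈ s, Real.log (d i) := by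
  rw [Real.log_mul hc (abs_ne_zero.2 (Finset.prod_ne_zero_iff.2 hd)), Real.log_abs,
    Real.log_prod hd]

theorem logpd2_eq_fderiv_fderiv {m : ℕ} {h : (Fin m → ℝ) → ℝ} {x : Fin m → ℝ}
    (hlog : ContDiffAt ℝ 2 (fun z => Real.log (h z)) x) (k l : Fin m) :
    logpd2 h k l x =
      fderiv ℝ (fderiv ℝ fun z => Real.log (h z)) x (Pi.single l 1) (Pi.single k 1) :=
  fderiv_fderiv_apply_const (differentiableAt_fderiv_of_contDiffAt_two hlog) _ _

theorem stmt2_general {m n : ℕ} {B : Fin n → Finset (Fin m)} (hB : IsBlockPartition B)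
    {φ : (Fin m → ℝ) → Fin m → ℝ} {h ht : (Fin m → ℝ) → ℝ} {U : Set (Fin m → ℝ)}
    (hU : IsOpen U) (hpos : ∀ x ∈ U, 0 < h x) (hφsm : ContDiffOn ℝ 3 φ U)
    (htsm : ∀ x ∈ U, ContDiffAt ℝ 2 ht (φ x)) (hφ : IsBlockProductOn B φ U)
    (hrel : ∀ x ∈ U, h x = ht (φ x) * |∏ i, blockDet B φ i x|)
    {i j : Fin n} (hij : i ≠ j) {k l : Fin m} (hk : k ∈ B i) (hl : l ∈ B j)
    {x : Fin m → ℝ} (hx : x ∈ U) :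
    logpd2 h k l x =
      ∑ a ∈ B i, ∑ b ∈ B j,
        logpd2 ht a b (φ x)
          * fderiv ℝ (fun z => φ z a) x (Pi.single k (1:ℝ))
          * fderiv ℝ (fun z => φ z b) x (Pi.single l (1:ℝ)) := by
  have hne : ∀ y ∈ U, ht (φ y) ≠ 0 ∧ ∀ p ∈ Finset.univ, blockDet B φ p y ≠ 0 := fun y hy => by
    simpa only [hrel y hy, mul_ne_zero_iff, abs_ne_zero, Finset.prod_ne_zero_iff]
      using (hpos y hy).ne'
  have hφx : ContDiffAt ℝ 3 φ x := hφsm.contDiffAt (hU.mem_nhds hx)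
  have hφx₂ : ContDiffAt ℝ 2 φ x := hφx.of_le (by norm_num)
  have hloght : ContDiffAt ℝ 2 (fun z => Real.log (ht z)) (φ x) := (htsm x hx).log (hne x hx).1
  have hlogdet (p : Fin n) : ContDiffAt ℝ 2 (fun z => Real.log (blockDet B φ p z)) x :=
    (contDiffAt_blockDet (hφx.of_le (by norm_num)) p).log ((hne x hx).2 p (Finset.mem_univ p))
  have hcomp : ContDiffAt ℝ 2 ((fun z => Real.log (ht z)) ∘ φ) x := hloght.comp x hφx₂
  have hsum : ContDiffAt ℝ 2 (fun z => ∑ p, Real.log (blockDet B φ p z)) x :=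
    ContDiffAt.sum fun p _ => hlogdet p
  have hlog : (fun z => Real.log (h z)) =ᶠ[𝓝 x] fun z =>
      ((fun z => Real.log (ht z)) ∘ φ) z + ∑ p, Real.log (blockDet B φ p z) :=
    Filter.eventually_of_mem (hU.mem_nhds hx) fun z hz => by
      simpa only [hrel z hz, Function.comp_apply] using log_mul_abs_prod (hne z hz).1 (hne z hz).2
  rw [logpd2_eq_fderiv_fderiv ((hcomp.add hsum).congr_of_eventuallyEq hlog),
    hlog.fderiv.fderiv_eq, fderiv_fderiv_fun_add hcomp hsum, add_apply, add_apply,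
    fderiv_fderiv_sum_log_blockDet_eq_zero hφ hB hU hij hk hl hx hlogdet, add_zero,
    hφ.fderiv_fderiv_comp_single_single hB hU hij hk hl hx hφx₂ hloght]
  refine Finset.sum_congr rfl fun a _ => Finset.sum_congr rfl fun b _ => ?_
  rw [logpd2_eq_fderiv_fderiv hloght, smul_eq_mul]
  ring

/-- The nonuniformity tensor transforms tensorially under block-preserving
volume-compatible coordinate changes: if `h = (h̃ ∘ φ) · |∏ det Dφ_i|`, then the mixed
logarithmic second derivatives of `h` across blocks are the pullback of those of `h̃`. -/
theorem stmt2 {m n : ℕ} (hm : 2 ≤ m) (hn : 2 ≤ n)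
    (B : Fin n → Finset (Fin m))
    (hBne : ∀ i, (B i).Nonempty)
    (hBdisj : ∀ i j, i ≠ j → Disjoint (B i) (B j))
    (hBcover : ∀ k, ∃ i, k ∈ B i)
    (φ : (Fin m → ℝ) → (Fin m → ℝ))
    (h ht : (Fin m → ℝ) → ℝ)
    (U V Vt : Set (Fin m → ℝ))
    (hU : IsOpen U) (h0U : (0 : Fin m → ℝ) ∈ U)
    (hV : IsOpen V) (h0V : (0 : Fin m → ℝ) ∈ V) (hUV : U ⊆ V)
    (hVt : IsOpen Vt) (h0Vt : (0 : Fin m → ℝ) ∈ Vt)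
    (hsm : ContDiffOn ℝ (⊤ : ℕ∞) h V) (hpos : ∀ x ∈ V, 0 < h x)
    (htsm : ContDiffOn ℝ (⊤ : ℕ∞) ht Vt) (htpos : ∀ x ∈ Vt, 0 < ht x)
    (hφ0 : φ 0 = 0) (hφsm : ContDiffOn ℝ (⊤ : ℕ∞) φ U) (hφinj : Set.InjOn φ U)
    (hφinv : ∀ x ∈ U, ∃ L : (Fin m → ℝ) ≃L[ℝ] (Fin m → ℝ),
      fderiv ℝ φ x = (L : (Fin m → ℝ) →L[ℝ] (Fin m → ℝ)))
    (hφblock : ∀ i : Fin n, ∀ a ∈ B i, ∀ x ∈ U, ∀ y ∈ U,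
      (∀ k ∈ B i, x k = y k) → φ x a = φ y a)
    (hφran : ∀ x ∈ U, φ x ∈ Vt)
    (hrel : ∀ x ∈ U, h x = ht (φ x) * |∏ i, blockDet B φ i x|) :
    ∃ U' : Set (Fin m → ℝ), IsOpen U' ∧ (0 : Fin m → ℝ) ∈ U' ∧ U' ⊆ U ∧
      ∀ i j : Fin n, i ≠ j → ∀ k ∈ B i, ∀ l ∈ B j, ∀ x ∈ U',
        logpd2 h k l x =
          ∑ a ∈ B i, ∑ b ∈ B j,
            logpd2 ht a b (φ x)
              * fderiv ℝ (fun z => φ z a) x (Pi.single k (1:ℝ))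
              * fderiv ℝ (fun z => φ z b) x (Pi.single l (1:ℝ)) := by
  have hφ₃ : ContDiffOn ℝ 3 φ U := hφsm.of_le (WithTop.coe_le_coe.2 le_top)
  have ht₂ : ∀ y ∈ U, ContDiffAt ℝ 2 ht (φ y) := fun y hy =>
    (htsm.contDiffAt (hVt.mem_nhds (hφran y hy))).of_le (WithTop.coe_le_coe.2 le_top)
  exact ⟨U, hU, h0U, subset_rfl, fun i j hij k hk l hl x hx =>
    stmt2_general ⟨fun i j => hBdisj i j, hBcover⟩ hU (fun y hy => hpos y (hUV hy)) hφ₃ ht₂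
      hφblock hrel hij hk hl hx⟩
end
end

section
/- Let m ≥ 2, let U ⊆ ℝ^m be open, and let h : U → ℝ be smooth and positive. Define Christoffel symbols Γ^k_{ij} : U → ℝ by Γ^i_{ii} = ∂(log h)/∂x_i for each i, and Γ^k_{ij} = 0 whenever the indices i,j,k are not all equal. Then the Ricci tensor Rc_{ij} = Σ_k [ ∂_i Γ^k_{kj} − ∂_k Γ^k_{ij} + Σ_l ( Γ^k_{il} Γ^l_{kj} − Γ^k_{kl} Γ^l_{ij} ) ] satisfies Rc_{ij} = ∂²(log h)/∂x_i∂x_j for all i ≠ j, and Rc_{ii} = 0 for all i. -/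
open MeasureTheory

noncomputable section

/-- Partial derivative `∂f/∂x_i` at `x`. -/
def pd {m : ℕ} (f : (Fin m → ℝ) → ℝ) (i : Fin m) (x : Fin m → ℝ) : ℝ :=
  fderiv ℝ f x (Pi.single i (1:ℝ))

/-- Ricci tensor `Rc_{ij} = Σ_k [ ∂_i Γ^k_{kj} − ∂_k Γ^k_{ij}
    + Σ_l ( Γ^k_{il} Γ^l_{kj} − Γ^k_{kl} Γ^l_{ij} ) ]`, where `Γ k i j = Γ^k_{ij}`. -/
def ricci {m : ℕ} (Γ : Fin m → Fin m → Fin m → (Fin m → ℝ) → ℝ)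
    (i j : Fin m) (x : Fin m → ℝ) : ℝ :=
  ∑ k, (pd (Γ k k j) i x - pd (Γ k i j) k x
    + ∑ l, (Γ k i l x * Γ l k j x - Γ k k l x * Γ l i j x))

/-- Christoffel symbols of the natural connection of the codimension-1 divergence-free
`m`-web with volume density `h`: `Γ^i_{ii} = ∂(log h)/∂x_i` and all other entries zero. -/
def natGamma {m : ℕ} (h : (Fin m → ℝ) → ℝ) (k i j : Fin m) (x : Fin m → ℝ) : ℝ :=
  if i = j ∧ j = k then pd (fun z => Real.log (h z)) i x else 0

/-!
A product `Γ^k_{il} Γ^l_{kj}` or `Γ^k_{kl} Γ^l_{ij}` of Christoffel symbols supported on the full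
diagonal is nonzero only if `i = j = k = l`, where both products are `(Γ^i_{ii})²`; so the quadratic
part of the Ricci tensor cancels termwise. In its linear part only `k = j` survives, leaving
`Rc_{ij} = ∂_i Γ^j_{jj} − ∂_j Γ^j_{ij}`. This vanishes for `i = j` and is `∂_i Γ^j_{jj}` otherwise,
which for `Γ^j_{jj} = ∂_j (log h)` is a mixed second derivative.
-/

section PartialDerivatives

variable {m : ℕ} {f : (Fin m → ℝ) → ℝ} {x : Fin m → ℝ}

theorem pd_zero (i : Fin m) : pd 0 i x = 0 := by
  simp [pd]

theorem pd_pd_eq_fderiv_fderiv (hf : DifferentiableAt ℝ (fderiv ℝ f) x) (i j : Fin m) :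
    pd (pd f i) j x = fderiv ℝ (fderiv ℝ f) x (Pi.single j 1) (Pi.single i 1) := by
  unfold pd
  simp [fderiv_clm_apply hf (differentiableAt_const _)]

theorem pd_comm (hf : ContDiffAt ℝ 2 f x) (i j : Fin m) :
    pd (pd f i) j x = pd (pd f j) i x := by
  have hsymm : IsSymmSndFDerivAt ℝ f x := hf.isSymmSndFDerivAt (by simp)
  have hdiff : DifferentiableAt ℝ (fderiv ℝ f) x :=
    (hf.fderiv_right (m := 1) (by norm_num)).differentiableAt one_ne_zero
  rw [pd_pd_eq_fderiv_fderiv hdiff, pd_pd_eq_fderiv_fderiv hdiff, hsymm]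

end PartialDerivatives

/-- Christoffel symbols `Γ k i j = Γ^k_{ij}` supported on the full diagonal `i = j = k`. These are
the torsion-free connections for which every foliation `{x_i = const}` is parallel. -/
def IsDiagonalChristoffel {m : ℕ} (Γ : Fin m → Fin m → Fin m → (Fin m → ℝ) → ℝ) : Prop :=
  ∀ k i j, ¬(i = j ∧ j = k) → Γ k i j = 0

namespace IsDiagonalChristoffel

variable {m : ℕ} {Γ : Fin m → Fin m → Fin m → (Fin m → ℝ) → ℝ}

theorem mul_sub_mul_eq_zero (hΓ : IsDiagonalChristoffel Γ) (i j k l : Fin m) (x : Fin m → ℝ) :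
    Γ k i l x * Γ l k j x - Γ k k l x * Γ l i j x = 0 := by
  rcases eq_or_ne l k with rfl | hlk
  · rcases eq_or_ne i l with rfl | hil
    · exact sub_self _
    · simp [hΓ l i l fun h => hil h.1, hΓ l i j fun h => hil (h.1.trans h.2)]
  · simp [hΓ k i l fun h => hlk h.2, hΓ k k l fun h => hlk h.2]

theorem ricci_eq (hΓ : IsDiagonalChristoffel Γ) (i j : Fin m) (x : Fin m → ℝ) :
    ricci Γ i j x = pd (Γ j j j) i x - pd (Γ j i j) j x := by
  have hlinear : ricci Γ i j x = ∑ k, (pd (Γ k k j) i x - pd (Γ k i j) k x) := by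
    simp only [ricci, hΓ.mul_sub_mul_eq_zero, Finset.sum_const_zero, add_zero]
  rw [hlinear]
  refine Fintype.sum_eq_single j fun k hkj => ?_
  rw [hΓ k k j fun h => hkj h.1, hΓ k i j fun h => hkj h.2.symm, pd_zero, pd_zero, sub_zero]

theorem ricci_self (hΓ : IsDiagonalChristoffel Γ) (i : Fin m) (x : Fin m → ℝ) :
    ricci Γ i i x = 0 := by
  rw [hΓ.ricci_eq, sub_self]

theorem ricci_of_ne (hΓ : IsDiagonalChristoffel Γ) {i j : Fin m} (hij : i ≠ j)
    (x : Fin m → ℝ) : ricci Γ i j x = pd (Γ j j j) i x := by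
  rw [hΓ.ricci_eq, hΓ j i j fun h => hij h.1, pd_zero, sub_zero]

end IsDiagonalChristoffel

section NaturalConnection

variable {m : ℕ} (h : (Fin m → ℝ) → ℝ)

theorem isDiagonalChristoffel_natGamma : IsDiagonalChristoffel (natGamma h) :=
  fun _ _ _ hkij => funext fun _ => if_neg hkij

theorem natGamma_self (k : Fin m) :
    natGamma h k k k = pd (fun z => Real.log (h z)) k :=
  funext fun _ => if_pos ⟨rfl, rfl⟩

theorem logpd2_eq_pd_pd (i j : Fin m) (x : Fin m → ℝ) :
    logpd2 h i j x = pd (pd (fun z => Real.log (h z)) i) j x :=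
  rfl

theorem ricci_natGamma_of_ne {x : Fin m → ℝ}
    (hlog : ContDiffAt ℝ 2 (fun z => Real.log (h z)) x) {i j : Fin m} (hij : i ≠ j) :
    ricci (natGamma h) i j x = logpd2 h i j x := by
  rw [(isDiagonalChristoffel_natGamma h).ricci_of_ne hij, natGamma_self, logpd2_eq_pd_pd,
    pd_comm hlog]

end NaturalConnection

theorem stmt4_general {m : ℕ} (U : Set (Fin m → ℝ)) (hU : IsOpen U)
    (h : (Fin m → ℝ) → ℝ) (hC2 : ContDiffOn ℝ 2 h U) (hpos : ∀ x ∈ U, 0 < h x) :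
    (∀ i j : Fin m, i ≠ j → ∀ x ∈ U, ricci (natGamma h) i j x = logpd2 h i j x) ∧
    (∀ i : Fin m, ∀ x ∈ U, ricci (natGamma h) i i x = 0) := by
  refine ⟨fun i j hij x hx => ?_, fun i x _ => (isDiagonalChristoffel_natGamma h).ricci_self i x⟩
  have hlog : ContDiffAt ℝ 2 (fun z => Real.log (h z)) x :=
    (hC2.contDiffAt (hU.mem_nhds hx)).log (hpos x hx).ne'
  exact ricci_natGamma_of_ne h hlog hij

/-- The Ricci tensor of the natural connection of the codimension-1
divergence-free web with density `h` equals its nonuniformity tensor: the off-diagonal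
components are `∂²(log h)/∂x_i∂x_j` and the diagonal ones vanish. -/
theorem stmt4 {m : ℕ} (hm : 2 ≤ m)
    (U : Set (Fin m → ℝ)) (hU : IsOpen U)
    (h : (Fin m → ℝ) → ℝ)
    (hsm : ContDiffOn ℝ (⊤ : ℕ∞) h U) (hpos : ∀ x ∈ U, 0 < h x) :
    (∀ i j : Fin m, i ≠ j → ∀ x ∈ U, ricci (natGamma h) i j x = logpd2 h i j x) ∧
    (∀ i : Fin m, ∀ x ∈ U, ricci (natGamma h) i i x = 0) :=
  stmt4_general U hU h (contDiffOn_infty.1 hsm 2) hpos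
end
end

section
/- Let m ≥ 2, let U ⊆ ℝ^m be an open box (a product of open intervals), and let h : U → ℝ be smooth and positive. Then ∂²(log h)/∂x_i∂x_j ≡ 0 on U for all pairs i ≠ j if and only if there exist smooth positive functions g_1,…,g_m of one real variable such that h(x_1,…,x_m) = g_1(x_1)·g_2(x_2)·…·g_m(x_m) on U. Consequently, the connection with Christoffel symbols Γ^i_{ii} = ∂(log h)/∂x_i (all other Γ^k_{ij} = 0) is Ricci-flat on U if and only if h factorizes in this way. -/
open MeasureTheory

noncomputable section

/-
If the mixed second derivatives of `f` vanish on a box, then `∂_i f` depends on `x_i` alone, so `f`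
and the sum of its restrictions to the coordinate lines through a fixed point `a` of the box have
the same partial derivatives and differ by a constant. Applied to `f = log h` and exponentiated,
this factorizes `h`. For a connection whose only nonzero Christoffel symbols are the `Γ^i_{ii}`, the
quadratic terms of the Ricci tensor cancel in pairs and `Rc_{ij} = ∂_i Γ^j_{jj}` for `i ≠ j`, so
Ricci-flatness is the same condition on `log h`.
-/

section PartialDeriv

variable {𝕜 ι F : Type*} [NontriviallyNormedField 𝕜] [DecidableEq ι]
  [NormedAddCommGroup F] [NormedSpace 𝕜 F]

variable (𝕜) in
/-- The partial derivative `∂f/∂x_i` at `x` of a vector-valued function on a coordinate space over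
any normed field; for real-valued functions on `Fin m → ℝ` it unfolds to `pd`. -/
def partialDeriv (f : (ι → 𝕜) → F) (i : ι) (x : ι → 𝕜) : F :=
  fderiv 𝕜 f x (Pi.single i 1)

@[simp]
theorem partialDeriv_const (c : F) (i : ι) (x : ι → 𝕜) : partialDeriv 𝕜 (fun _ => c) i x = 0 := by
  simp [partialDeriv]

theorem partialDeriv_congr_of_isOpen {f g : (ι → 𝕜) → F} {U : Set (ι → 𝕜)} (hU : IsOpen U)
    (hfg : U.EqOn f g) {x : ι → 𝕜} (hx : x ∈ U) (i : ι) :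
    partialDeriv 𝕜 f i x = partialDeriv 𝕜 g i x := by
  rw [partialDeriv, (hfg.eventuallyEq_of_mem (hU.mem_nhds hx)).fderiv_eq, partialDeriv]

section Finite

variable [Finite ι]

theorem deriv_comp_update {f : (ι → 𝕜) → F} {a : ι → 𝕜} {i : ι} {t : 𝕜}
    (hf : DifferentiableAt 𝕜 f (Function.update a i t)) :
    deriv (fun s => f (Function.update a i s)) t = partialDeriv 𝕜 f i (Function.update a i t) := by
  have := Fintype.ofFinite ι
  exact (hf.hasFDerivAt.comp_hasDerivAt t (hasDerivAt_update a i t)).deriv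

omit [DecidableEq ι] in
theorem differentiableAt_comp_eval_iff {φ : 𝕜 → F} {i : ι} {x : ι → 𝕜} :
    DifferentiableAt 𝕜 (fun z : ι → 𝕜 => φ (z i)) x ↔ DifferentiableAt 𝕜 φ (x i) := by
  classical
  have := Fintype.ofFinite ι
  refine ⟨fun h => ?_, fun h => h.comp x (differentiableAt_apply i x)⟩
  rw [← Function.update_eq_self i x] at h
  simpa [Function.comp_def] using
    h.comp (x i) (hasFDerivAt_update (𝕜 := 𝕜) x (x i)).differentiableAt

theorem partialDeriv_comp_eval (φ : 𝕜 → F) (i j : ι) (x : ι → 𝕜) :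
    partialDeriv 𝕜 (fun z => φ (z i)) j x = if j = i then deriv φ (x i) else 0 := by
  have := Fintype.ofFinite ι
  by_cases hφ : DifferentiableAt 𝕜 φ (x i)
  · have chain : fderiv 𝕜 (fun z : ι → 𝕜 => φ (z i)) x = (fderiv 𝕜 φ (x i)).comp (.proj i) :=
      (hφ.hasFDerivAt.comp (f := fun z : ι → 𝕜 => z i) x (hasFDerivAt_apply i x)).fderiv
    rw [partialDeriv, chain, ContinuousLinearMap.comp_apply, ContinuousLinearMap.proj_apply]
    obtain rfl | hji := eq_or_ne j i
    · simp
    · simp [hji]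
  · simp [partialDeriv, deriv_zero_of_not_differentiableAt hφ,
      fderiv_zero_of_not_differentiableAt (differentiableAt_comp_eval_iff.not.2 hφ)]

theorem hasFDerivAt_update_left (i : ι) (c : 𝕜) (x : ι → 𝕜) :
    HasFDerivAt (fun z : ι → 𝕜 => Function.update z i c)
      (.pi fun k => if k = i then 0 else .proj k : (ι → 𝕜) →L[𝕜] ι → 𝕜) x := by
  have := Fintype.ofFinite ι
  refine hasFDerivAt_pi.2 fun k => ?_
  obtain rfl | hk := eq_or_ne k i
  · simpa using hasFDerivAt_const c x
  · simpa [hk] using hasFDerivAt_apply k x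

theorem partialDeriv_comp_update_left {f : (ι → 𝕜) → F} {i : ι} {c : 𝕜} {x : ι → 𝕜}
    (hf : DifferentiableAt 𝕜 f (Function.update x i c)) (j : ι) :
    partialDeriv 𝕜 (fun z => f (Function.update z i c)) j x =
      if j = i then 0 else partialDeriv 𝕜 f j (Function.update x i c) := by
  have := Fintype.ofFinite ι
  have image_single : (.pi fun k => if k = i then 0 else .proj k : (ι → 𝕜) →L[𝕜] ι → 𝕜)
      (Pi.single j 1) = if j = i then 0 else Pi.single j 1 := by
    ext k
    by_cases hk : k = i <;> by_cases hj : j = i <;> simp_all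
  have chain := (hf.hasFDerivAt.comp x (hasFDerivAt_update_left i c x)).fderiv
  rw [partialDeriv, ← Function.comp_def f, chain, ContinuousLinearMap.comp_apply, image_single]
  split_ifs <;> simp [partialDeriv]

end Finite

variable [Fintype ι]

theorem contDiffOn_partialDeriv {f : (ι → 𝕜) → F} {U : Set (ι → 𝕜)} {n k : WithTop ℕ∞}
    (hf : ContDiffOn 𝕜 n f U) (hU : IsOpen U) (hkn : k + 1 ≤ n) (i : ι) :
    ContDiffOn 𝕜 k (partialDeriv 𝕜 f i) U :=
  (hf.fderiv_of_isOpen hU hkn).clm_apply contDiffOn_const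

theorem partialDeriv_sum_comp_eval {φ : ι → 𝕜 → F} {x : ι → 𝕜}
    (hφ : ∀ k, DifferentiableAt 𝕜 (φ k) (x k)) (i : ι) :
    partialDeriv 𝕜 (fun z => ∑ k, φ k (z k)) i x = deriv (φ i) (x i) := by
  have hφ_eval : ∀ k ∈ Finset.univ, DifferentiableAt 𝕜 (fun z : ι → 𝕜 => φ k (z k)) x :=
    fun k _ => differentiableAt_comp_eval_iff.2 (hφ k)
  calc partialDeriv 𝕜 (fun z => ∑ k, φ k (z k)) i x
      = ∑ k, partialDeriv 𝕜 (fun z => φ k (z k)) i x := by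
        simp only [partialDeriv, fderiv_fun_sum hφ_eval, sum_apply]
    _ = deriv (φ i) (x i) := by simp [partialDeriv_comp_eval]

end PartialDeriv

section SumSeparable

variable {𝕜 ι F : Type*} [NontriviallyNormedField 𝕜] [Fintype ι]
  [NormedAddCommGroup F] [NormedSpace 𝕜 F]

/-- Additive separation of variables on the box `Π_k I_k`: there, `f` is a sum of functions of
one coordinate each, the `k`-th one being `C^n` on `I_k`. -/
def IsSumSeparableOn (n : WithTop ℕ∞) (f : (ι → 𝕜) → F) (I : ι → Set 𝕜) : Prop :=
  ∃ φ : ι → 𝕜 → F, (∀ k, ContDiffOn 𝕜 n (φ k) (I k)) ∧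
    ∀ x ∈ Set.univ.pi I, f x = ∑ k, φ k (x k)

variable [DecidableEq ι] {I : ι → Set 𝕜} {f : (ι → 𝕜) → F} {n : WithTop ℕ∞}

theorem IsSumSeparableOn.partialDeriv_partialDeriv_eq_zero (hf : IsSumSeparableOn n f I)
    (hn : n ≠ 0) (hIo : ∀ k, IsOpen (I k)) {i j : ι} (hij : i ≠ j) {x : ι → 𝕜}
    (hx : x ∈ Set.univ.pi I) : partialDeriv 𝕜 (partialDeriv 𝕜 f i) j x = 0 := by
  obtain ⟨φ, hφ, hfφ⟩ := hf
  have hU : IsOpen (Set.univ.pi I) := isOpen_set_pi Set.finite_univ fun k _ => hIo k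
  have first_order : (Set.univ.pi I).EqOn (partialDeriv 𝕜 f i) fun y => deriv (φ i) (y i) :=
    fun y hy => by
      rw [partialDeriv_congr_of_isOpen hU hfφ hy, partialDeriv_sum_comp_eval fun k =>
        ((hφ k).differentiableOn hn).differentiableAt ((hIo k).mem_nhds (hy k trivial))]
  rw [partialDeriv_congr_of_isOpen hU first_order hx, partialDeriv_comp_eval, if_neg hij.symm]

theorem contDiffOn_comp_update (hf : ContDiffOn 𝕜 n f (Set.univ.pi I)) {a : ι → 𝕜}
    (ha : a ∈ Set.univ.pi I) (k : ι) : ContDiffOn 𝕜 n (fun t => f (Function.update a k t)) (I k) :=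
  hf.comp (contDiff_update n a k).contDiffOn
    fun _ ht => (Set.update_mem_pi_iff_of_mem ha).2 fun _ => ht

end SumSeparable

section MixedDerivatives

variable {𝕜 ι F : Type*} [RCLike 𝕜] [DecidableEq ι]
  [NormedAddCommGroup F] [NormedSpace 𝕜 F]
  {I : ι → Set 𝕜} {f : (ι → 𝕜) → F} {n : WithTop ℕ∞}

theorem eqOn_of_partialDeriv_eq [Finite ι] {U : Set (ι → 𝕜)} (hUo : IsOpen U)
    (hUc : IsPreconnected U) {f g : (ι → 𝕜) → F} (hf : DifferentiableOn 𝕜 f U)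
    (hg : DifferentiableOn 𝕜 g U)
    (hfg : ∀ i, ∀ x ∈ U, partialDeriv 𝕜 f i x = partialDeriv 𝕜 g i x)
    {a : ι → 𝕜} (ha : a ∈ U) (hfga : f a = g a) : U.EqOn f g := by
  have := Fintype.ofFinite ι
  refine hUo.eqOn_of_fderiv_eq hUc hf hg (fun x hx => ?_) ha hfga
  exact ContinuousLinearMap.coe_injective <|
    LinearMap.pi_ext' fun i => LinearMap.ext_ring (hfg i x hx)

theorem partialDeriv_update_eq_of_mixed_eq_zero [Finite ι] (hIo : ∀ k, IsOpen (I k))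
    (hIc : ∀ k, IsPreconnected (I k)) {i : ι}
    (hf : DifferentiableOn 𝕜 (partialDeriv 𝕜 f i) (Set.univ.pi I))
    (hmixed : ∀ j ≠ i, ∀ x ∈ Set.univ.pi I, partialDeriv 𝕜 (partialDeriv 𝕜 f i) j x = 0)
    {a x : ι → 𝕜} (ha : a ∈ Set.univ.pi I) (hx : x ∈ Set.univ.pi I) :
    partialDeriv 𝕜 f i (Function.update a i (x i)) = partialDeriv 𝕜 f i x := by
  have hU : IsOpen (Set.univ.pi I) := isOpen_set_pi Set.finite_univ fun k _ => hIo k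
  have := Fintype.ofFinite ι
  have hf_update : ∀ z ∈ Set.univ.pi I,
      DifferentiableAt 𝕜 (partialDeriv 𝕜 f i) (Function.update z i (x i)) := fun z hz =>
    hf.differentiableAt (hU.mem_nhds ((Set.update_mem_pi_iff_of_mem hz).2 fun _ => hx i trivial))
  have update_const : (Set.univ.pi I).EqOn
      (fun z => partialDeriv 𝕜 f i (Function.update z i (x i))) fun _ => partialDeriv 𝕜 f i x := by
    have update_diff := fun z => (hasFDerivAt_update_left i (x i) z).differentiableAt
    refine eqOn_of_partialDeriv_eq hU (isPreconnected_univ_pi hIc)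
      (fun z hz => ((hf_update z hz).fun_comp' z (update_diff z)).differentiableWithinAt)
      (differentiableOn_const _) (fun j z hz => ?_) hx (by simp)
    rw [partialDeriv_comp_update_left (hf_update z hz), partialDeriv_const]
    split_ifs with hj
    · rfl
    · exact hmixed j hj _ ((Set.update_mem_pi_iff_of_mem hz).2 fun _ => hx i trivial)
  exact update_const ha

variable [Fintype ι]

theorem sub_eq_sum_update_sub_of_mixed_eq_zero (hIo : ∀ k, IsOpen (I k))
    (hIc : ∀ k, IsPreconnected (I k)) (hf : ContDiffOn 𝕜 2 f (Set.univ.pi I))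
    (hmixed : ∀ i j, i ≠ j → ∀ x ∈ Set.univ.pi I, partialDeriv 𝕜 (partialDeriv 𝕜 f i) j x = 0)
    {a x : ι → 𝕜} (ha : a ∈ Set.univ.pi I) (hx : x ∈ Set.univ.pi I) :
    f x - f a = ∑ k, (f (Function.update a k (x k)) - f a) := by
  have hU : IsOpen (Set.univ.pi I) := isOpen_set_pi Set.finite_univ fun k _ => hIo k
  have hf_diff : DifferentiableOn 𝕜 f (Set.univ.pi I) := hf.differentiableOn (by simp)
  have slice_diff : ∀ z ∈ Set.univ.pi I, ∀ k,
      DifferentiableAt 𝕜 (fun t => f (Function.update a k t) - f a) (z k) := fun z hz k =>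
    (((contDiffOn_comp_update hf ha k).differentiableOn (by simp)).sub_const _).differentiableAt
      ((hIo k).mem_nhds (hz k trivial))
  refine eqOn_of_partialDeriv_eq (f := fun z => f z - f a)
    (g := fun z => ∑ k, (f (Function.update a k (z k)) - f a)) hU (isPreconnected_univ_pi hIc)
    (hf_diff.sub_const _) (fun z hz => ?_) (fun i z hz => ?_) ha (by simp) hx
  · exact DifferentiableWithinAt.fun_sum fun k _ =>
      (differentiableAt_comp_eval_iff.2 (slice_diff z hz k)).differentiableWithinAt
  · have hf_partial := (contDiffOn_partialDeriv hf hU one_add_one_eq_two.le i).differentiableOn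
      one_ne_zero
    have hf_slice := hf_diff.differentiableAt
      (hU.mem_nhds ((Set.update_mem_pi_iff_of_mem ha).2 fun _ => hz i trivial))
    calc partialDeriv 𝕜 (fun z => f z - f a) i z
        = partialDeriv 𝕜 f i z := by simp only [partialDeriv, fderiv_sub_const]
      _ = partialDeriv 𝕜 f i (Function.update a i (z i)) :=
          (partialDeriv_update_eq_of_mixed_eq_zero hIo hIc hf_partial
            (fun j hj => hmixed i j hj.symm) ha hz).symm
      _ = deriv (fun t => f (Function.update a i t) - f a) (z i) := by
          rw [deriv_sub_const, deriv_comp_update hf_slice]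
      _ = partialDeriv 𝕜 (fun z => ∑ k, (f (Function.update a k (z k)) - f a)) i z :=
          (partialDeriv_sum_comp_eval (slice_diff z hz) i).symm

theorem isSumSeparableOn_of_mixed_eq_zero [Nonempty ι] (hn : 2 ≤ n) (hIo : ∀ k, IsOpen (I k))
    (hIc : ∀ k, IsPreconnected (I k)) (hf : ContDiffOn 𝕜 n f (Set.univ.pi I))
    (hmixed : ∀ i j, i ≠ j → ∀ x ∈ Set.univ.pi I, partialDeriv 𝕜 (partialDeriv 𝕜 f i) j x = 0) :
    IsSumSeparableOn n f I := by
  obtain hempty | ⟨a, ha⟩ := (Set.univ.pi I).eq_empty_or_nonempty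
  · exact ⟨fun _ _ => 0, fun _ => contDiffOn_const, by simp [hempty]⟩
  obtain ⟨k₀⟩ := ‹Nonempty ι›
  -- The constant `f a` is absorbed into the summand of index `k₀`.
  refine ⟨fun k t => f (Function.update a k t) - f a + (Pi.single k₀ (f a) : ι → F) k,
    fun k => ((contDiffOn_comp_update hf ha k).sub contDiffOn_const).add contDiffOn_const,
    fun x hx => ?_⟩
  rw [Finset.sum_add_distrib, Fintype.sum_pi_single',
    ← sub_eq_sum_update_sub_of_mixed_eq_zero hIo hIc (hf.of_le hn) hmixed ha hx, sub_add_cancel]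

theorem isSumSeparableOn_iff_mixed_eq_zero [Nonempty ι] (hn : 2 ≤ n) (hIo : ∀ k, IsOpen (I k))
    (hIc : ∀ k, IsPreconnected (I k)) (hf : ContDiffOn 𝕜 n f (Set.univ.pi I)) :
    IsSumSeparableOn n f I ↔
      ∀ i j, i ≠ j → ∀ x ∈ Set.univ.pi I, partialDeriv 𝕜 (partialDeriv 𝕜 f i) j x = 0 :=
  ⟨fun h _ _ hij _ hx =>
    h.partialDeriv_partialDeriv_eq_zero (two_pos.trans_le hn).ne' hIo hij hx,
    isSumSeparableOn_of_mixed_eq_zero hn hIo hIc hf⟩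

end MixedDerivatives

section ProdSeparable

variable {ι : Type*} [Fintype ι] {n : WithTop ℕ∞} {h : (ι → ℝ) → ℝ} {I : ι → Set ℝ}

/-- Multiplicative separation of variables on the box `Π_k I_k`: there, `h` is a product of
positive functions of one coordinate each, the `k`-th one being `C^n` on `I_k`. -/
def IsProdSeparableOn (n : WithTop ℕ∞) (h : (ι → ℝ) → ℝ) (I : ι → Set ℝ) : Prop :=
  ∃ g : ι → ℝ → ℝ, (∀ k, ContDiffOn ℝ n (g k) (I k)) ∧ (∀ k, ∀ t ∈ I k, 0 < g k t) ∧
    ∀ x ∈ Set.univ.pi I, h x = ∏ k, g k (x k)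

theorem isProdSeparableOn_iff_isSumSeparableOn_log (hpos : ∀ x ∈ Set.univ.pi I, 0 < h x) :
    IsProdSeparableOn n h I ↔ IsSumSeparableOn n (fun x => Real.log (h x)) I := by
  constructor
  · rintro ⟨g, hg, hg_pos, hgh⟩
    refine ⟨fun k t => Real.log (g k t), fun k => (hg k).log fun t ht => (hg_pos k t ht).ne',
      fun x hx => ?_⟩
    simp only [hgh x hx]
    exact Real.log_prod fun k _ => (hg_pos k _ (hx k trivial)).ne'
  · rintro ⟨φ, hφ, hφh⟩
    refine ⟨fun k t => Real.exp (φ k t), fun k => (hφ k).exp, fun _ _ _ => Real.exp_pos _,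
      fun x hx => ?_⟩
    rw [← Real.exp_sum, ← hφh x hx, Real.exp_log (hpos x hx)]

end ProdSeparable

section Ricci

variable {m : ℕ}

theorem ricci_of_diagonal {Γ : Fin m → Fin m → Fin m → (Fin m → ℝ) → ℝ}
    (hΓ : ∀ k i j, ¬(i = j ∧ j = k) → Γ k i j = 0) (i j : Fin m) (x : Fin m → ℝ) :
    ricci Γ i j x = if i = j then 0 else pd (Γ j j j) i x := by
  have pd_eq_zero : ∀ k i j l, ¬(i = j ∧ j = k) → pd (Γ k i j) l x = 0 := fun k i j l hne => by
    rw [hΓ k i j hne]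
    exact partialDeriv_const 0 l x
  have apply_eq_zero : ∀ k i j, ¬(i = j ∧ j = k) → Γ k i j x = 0 := fun k i j hne =>
    congrFun (hΓ k i j hne) x
  have quadratic_cancel : ∀ k l, Γ k i l x * Γ l k j x - Γ k k l x * Γ l i j x = 0 := by
    intro k l
    by_cases hall : i = k ∧ l = k ∧ j = k
    · obtain ⟨rfl, rfl, rfl⟩ := hall
      exact sub_self _
    · have left_factor : Γ k i l x = 0 ∨ Γ l k j x = 0 := by grind
      have right_factor : Γ k k l x = 0 ∨ Γ l i j x = 0 := by grind
      rw [mul_eq_zero.2 left_factor, mul_eq_zero.2 right_factor, sub_zero]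
  have trace_pd : ∑ k, pd (Γ k k j) i x = pd (Γ j j j) i x :=
    Fintype.sum_eq_single j fun k hk => pd_eq_zero k k j i (by tauto)
  have divergence_pd : ∑ k, pd (Γ k i j) k x = if i = j then pd (Γ j j j) i x else 0 := by
    split_ifs with hij
    · subst hij
      exact Fintype.sum_eq_single i fun k hk => pd_eq_zero k i i k (by tauto)
    · exact Finset.sum_eq_zero fun k _ => pd_eq_zero k i j k (by tauto)
  simp only [ricci, quadratic_cancel, Finset.sum_const_zero, add_zero, Finset.sum_sub_distrib,
    trace_pd, divergence_pd]
  split_ifs <;> simp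

theorem ricci_natGamma (h : (Fin m → ℝ) → ℝ) (i j : Fin m) (x : Fin m → ℝ) :
    ricci (natGamma h) i j x = if i = j then 0 else logpd2 h j i x := by
  have natGamma_diag : natGamma h j j j = pd (fun z => Real.log (h z)) j := by
    ext y
    simp [natGamma]
  have natGamma_off_diag : ∀ k i j, ¬(i = j ∧ j = k) → natGamma h k i j = 0 :=
    fun k i j hne => funext fun y => if_neg hne
  rw [ricci_of_diagonal natGamma_off_diag, natGamma_diag]
  rfl

theorem ricci_natGamma_eq_zero_iff {h : (Fin m → ℝ) → ℝ} {U : Set (Fin m → ℝ)} :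
    (∀ i j, ∀ x ∈ U, ricci (natGamma h) i j x = 0) ↔
      ∀ i j, i ≠ j → ∀ x ∈ U, logpd2 h i j x = 0 := by
  simp only [ricci_natGamma, ite_eq_left_iff]
  exact ⟨fun H i j hij x hx => H j i x hx hij.symm, fun H i j x hx hij => H j i (Ne.symm hij) x hx⟩

end Ricci

theorem stmt5_general {m : ℕ} (hm : m ≠ 0) {n : WithTop ℕ∞} (hn : 2 ≤ n)
    (I : Fin m → Set ℝ) (hIopen : ∀ k, IsOpen (I k)) (hIconn : ∀ k, IsPreconnected (I k))
    (h : (Fin m → ℝ) → ℝ)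
    (hsm : ContDiffOn ℝ n h (Set.univ.pi I)) (hpos : ∀ x ∈ Set.univ.pi I, 0 < h x) :
    ((∀ i j : Fin m, i ≠ j → ∀ x ∈ Set.univ.pi I, logpd2 h i j x = 0) ↔
      IsProdSeparableOn n h I) ∧
    ((∀ i j : Fin m, ∀ x ∈ Set.univ.pi I, ricci (natGamma h) i j x = 0) ↔
      IsProdSeparableOn n h I) := by
  have : NeZero m := ⟨hm⟩
  have log_smooth : ContDiffOn ℝ n (fun x => Real.log (h x)) (Set.univ.pi I) :=
    hsm.log fun x hx => (hpos x hx).ne'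
  have mixed_iff : (∀ i j : Fin m, i ≠ j → ∀ x ∈ Set.univ.pi I, logpd2 h i j x = 0) ↔
      IsProdSeparableOn n h I :=
    (isSumSeparableOn_iff_mixed_eq_zero hn hIopen hIconn log_smooth).symm.trans
      (isProdSeparableOn_iff_isSumSeparableOn_log hpos).symm
  exact ⟨mixed_iff, ricci_natGamma_eq_zero_iff.trans mixed_iff⟩

/-- On an open box `U = Π_k I_k`, the mixed logarithmic second
derivatives of a smooth positive `h` vanish iff `h` factorizes as a product of smooth
positive one-variable functions; consequently the natural connection is Ricci-flat on
`U` iff `h` factorizes in this way. -/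
theorem stmt5 {m : ℕ} (hm : 2 ≤ m)
    (I : Fin m → Set ℝ) (hIopen : ∀ k, IsOpen (I k)) (hIconn : ∀ k, IsPreconnected (I k))
    (h : (Fin m → ℝ) → ℝ)
    (hsm : ContDiffOn ℝ (⊤ : ℕ∞) h (Set.univ.pi I)) (hpos : ∀ x ∈ Set.univ.pi I, 0 < h x) :
    ((∀ i j : Fin m, i ≠ j → ∀ x ∈ Set.univ.pi I, logpd2 h i j x = 0) ↔
      (∃ g : Fin m → ℝ → ℝ, (∀ k, ContDiffOn ℝ (⊤ : ℕ∞) (g k) (I k)) ∧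
        (∀ k, ∀ t ∈ I k, 0 < g k t) ∧
        (∀ x ∈ Set.univ.pi I, h x = ∏ k, g k (x k)))) ∧
    ((∀ i j : Fin m, ∀ x ∈ Set.univ.pi I, ricci (natGamma h) i j x = 0) ↔
      (∃ g : Fin m → ℝ → ℝ, (∀ k, ContDiffOn ℝ (⊤ : ℕ∞) (g k) (I k)) ∧
        (∀ k, ∀ t ∈ I k, 0 < g k t) ∧
        (∀ x ∈ Set.univ.pi I, h x = ∏ k, g k (x k)))) :=
  stmt5_general (by lia) (by norm_cast) I hIopen hIconn h hsm hpos
end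
end
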